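/- arXiv:1506.07420 — 2 statements merged into one kernel-verified Lean document; each statement's English description precedes it below -/
import Mathlib

section
/- Let F : ℝ → ℝ be a Schwartz function, let k(x) = e^(2ix)·( 1 + (1/2)·sech²(x/√2) + i·√2·tanh(x/√2) ), and let G(x) = (1/12)·Im( k(x)·∫_{-∞}^{x} conj(k(y))·F(y) dy + conj(k(x))·∫_{x}^{+∞} k(y)·F(y) dy ). Then G is a Schwartz function if and only if ∫_ℝ k(x)·F(x) dx = 0. -/
open MeasureTheory

noncomputable def sech (x : ℝ) : ℝ := 1 / Real.cosh x

noncomputable def kJost (x : ℝ) : ℂ :=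
  Complex.exp (2 * Complex.I * (x : ℂ)) *
    (1 + ((1 / 2 * sech (x / Real.sqrt 2) ^ 2 : ℝ) : ℂ)
      + Complex.I * (Real.sqrt 2 : ℂ) * ((Real.tanh (x / Real.sqrt 2) : ℝ) : ℂ))

open Filter Topology ComplexConjugate SchwartzMap
open Complex (I)

/-!
Write `J` for the integral of `k F` over the line and `T x` for its integral over `[x, ∞)`. As `F`
is real, the imaginary part of the variation of parameters formula is
`Im (k conj J) - 2 Im (k conj T)`. The second term vanishes at `+∞`, where `k` is asymptotic to a
nonzero plane wave, so decay of the solution makes `Im (k conj J)` tend to zero; a quarter period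
shift of the plane wave does the same for the real part, hence `J = 0`. Conversely, if `J = 0` then
`T` decays rapidly at `-∞` as well, so `T` is a Schwartz function, and so is `k conj T`.
-/

section PolynomialODE

open Polynomial

variable {𝕜 : Type*} [RCLike 𝕜] {f : ℝ → 𝕜} {p : 𝕜[X]}

lemma exists_iteratedDeriv_eq_eval_of_hasDerivAt_eval (hf : ∀ x, HasDerivAt f (p.eval (f x)) x)
    (n : ℕ) : ∃ q : 𝕜[X], iteratedDeriv n f = fun x => q.eval (f x) := by
  induction n with
  | zero => exact ⟨X, by simp⟩
  | succ n ih =>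
    obtain ⟨q, hq⟩ := ih
    refine ⟨derivative q * p, ?_⟩
    ext x
    rw [iteratedDeriv_succ, hq, eval_mul]
    exact ((q.hasDerivAt (f x)).comp x (hf x)).deriv

lemma hasTemperateGrowth_of_hasDerivAt_eval {C : ℝ} (hf : ∀ x, HasDerivAt f (p.eval (f x)) x)
    (hC : ∀ x, ‖f x‖ ≤ C) : f.HasTemperateGrowth := by
  choose q hq using exists_iteratedDeriv_eq_eval_of_hasDerivAt_eval hf
  refine ⟨contDiff_of_differentiable_iteratedDeriv fun n _ => ?_, fun n => ?_⟩
  · rw [hq]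
    exact fun x => (((q n).hasDerivAt (f x)).comp x (hf x)).differentiableAt
  · obtain ⟨M, hM⟩ := (isCompact_closedBall (0 : 𝕜) C).exists_bound_of_continuousOn
      (q n).continuous.continuousOn
    refine ⟨0, M, fun x => ?_⟩
    rw [norm_iteratedFDeriv_eq_norm_iteratedDeriv, hq, pow_zero, mul_one]
    exact hM _ (mem_closedBall_zero_iff.2 (hC x))

end PolynomialODE

lemma hasDerivAt_tanh (x : ℝ) : HasDerivAt Real.tanh (1 - Real.tanh x ^ 2) x := by
  have hcosh := (Real.cosh_pos x).ne'
  have htanh : Real.tanh = Real.sinh / Real.cosh := funext Real.tanh_eq_sinh_div_cosh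
  rw [htanh]
  refine ((Real.hasDerivAt_sinh x).div (Real.hasDerivAt_cosh x) hcosh).congr_deriv ?_
  rw [Pi.div_apply]
  field_simp

lemma hasTemperateGrowth_tanh : Real.tanh.HasTemperateGrowth := by
  refine hasTemperateGrowth_of_hasDerivAt_eval (p := 1 - Polynomial.X ^ 2) (C := 1)
    (fun x => by simpa using hasDerivAt_tanh x) fun x => ?_
  exact abs_le.2 ⟨(Real.neg_one_lt_tanh x).le, (Real.tanh_lt_one x).le⟩

lemma tendsto_tanh_atTop : Tendsto Real.tanh atTop (𝓝 1) := by
  have htanh : Real.tanh = fun x => (1 - Real.exp (-x) ^ 2) / (1 + Real.exp (-x) ^ 2) := by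
    ext x
    have hexp := (Real.exp_pos x).ne'
    rw [Real.tanh_eq, Real.exp_neg]
    field_simp
  have hsq := Real.tendsto_exp_neg_atTop_nhds_zero.pow 2
  rw [htanh]
  simpa using! (hsq.const_sub 1).div (hsq.const_add 1) (by norm_num)

section PlaneWave

lemma norm_planeWave (ω x : ℝ) : ‖Complex.exp (ω * I * x)‖ = 1 := by
  simp [Complex.norm_exp]

lemma hasTemperateGrowth_planeWave (ω : ℝ) :
    (fun x : ℝ => Complex.exp (ω * I * x)).HasTemperateGrowth := by
  refine hasTemperateGrowth_of_hasDerivAt_eval (p := Polynomial.C (ω * I) * Polynomial.X)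
    (fun x => ?_) fun x => (norm_planeWave ω x).le
  have hlin : HasDerivAt (fun x : ℝ => ω * I * x) (ω * I) x := by
    simpa using Complex.ofRealCLM.hasDerivAt.const_mul (ω * I)
  simpa [mul_comm] using hlin.cexp

lemma planeWave_add_quarter_period {ω : ℝ} (hω : ω ≠ 0) (x : ℝ) :
    Complex.exp (ω * I * ((x + Real.pi / 2 / ω : ℝ) : ℂ)) = I * Complex.exp (ω * I * x) := by
  have hphase : ω * I * ((x + Real.pi / 2 / ω : ℝ) : ℂ) = Real.pi / 2 * I + ω * I * x := by
    have hω' : (ω : ℂ) ≠ 0 := Complex.ofReal_ne_zero.2 hω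
    push_cast
    field_simp
    ring
  rw [hphase, Complex.exp_add, Complex.exp_pi_div_two_mul_I]

lemma eq_zero_of_tendsto_im_planeWave_mul {ω : ℝ} (hω : ω ≠ 0) {z : ℂ}
    (hz : Tendsto (fun x : ℝ => (Complex.exp (ω * I * x) * z).im) atTop (𝓝 0)) : z = 0 := by
  have hre : Tendsto (fun x : ℝ => (Complex.exp (ω * I * x) * z).re) atTop (𝓝 0) := by
    have hshift := tendsto_atTop_add_const_right atTop (Real.pi / 2 / ω) tendsto_id
    refine (hz.comp hshift).congr fun x => ?_
    rw [Function.comp_apply, id, planeWave_add_quarter_period hω, mul_assoc, Complex.I_mul_im]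
  have hnorm := (hre.pow 2).add (hz.pow 2)
  have hconst : ∀ x : ℝ, (Complex.exp (ω * I * x) * z).re ^ 2 + (Complex.exp (ω * I * x) * z).im ^ 2
      = ‖z‖ ^ 2 := fun x => by
    rw [← one_mul ‖z‖, ← norm_planeWave ω x, ← norm_mul, Complex.sq_norm, Complex.normSq_apply]
    ring
  simp only [hconst] at hnorm
  simpa using tendsto_nhds_unique tendsto_const_nhds hnorm

end PlaneWave

section Tail

variable {E : Type*} [NormedAddCommGroup E] [NormedSpace ℝ E]

lemma integral_Iic_add_Ici {f : ℝ → E} (hf : Integrable f) (x : ℝ) :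
    (∫ y in Set.Iic x, f y) + ∫ y in Set.Ici x, f y = ∫ y, f y := by
  rw [integral_Ici_eq_integral_Ioi]
  exact intervalIntegral.integral_Iic_add_Ioi hf.integrableOn hf.integrableOn

lemma hasDerivAt_integral_Ici [CompleteSpace E] {f : ℝ → E} (hf : Integrable f)
    (hcont : Continuous f) (x : ℝ) : HasDerivAt (fun x => ∫ y in Set.Ici x, f y) (-f x) x := by
  have hsplit : (fun x => ∫ y in Set.Ici x, f y)
      = fun x => (∫ y in Set.Ici 0, f y) - ∫ y in (0 : ℝ)..x, f y := by
    ext x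
    rw [← intervalIntegral.integral_Ici_sub_Ici' hf.integrableOn hf.integrableOn, sub_sub_cancel]
  rw [hsplit]
  exact (hcont.integral_hasStrictDerivAt 0 x).hasDerivAt.const_sub _

lemma norm_pow_mul_norm_setIntegral_le {f : ℝ → E} {k : ℕ} {x : ℝ} {s : Set ℝ} (hf : Integrable f)
    (hfk : Integrable fun y => ‖y‖ ^ k * ‖f y‖) (hs : MeasurableSet s)
    (hx : ∀ y ∈ s, ‖x‖ ≤ ‖y‖) :
    ‖x‖ ^ k * ‖∫ y in s, f y‖ ≤ ∫ y, ‖y‖ ^ k * ‖f y‖ :=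
  calc ‖x‖ ^ k * ‖∫ y in s, f y‖
      ≤ ‖x‖ ^ k * ∫ y in s, ‖f y‖ := by
        gcongr
        exact norm_integral_le_integral_norm _
    _ = ∫ y in s, ‖x‖ ^ k * ‖f y‖ := (integral_const_mul _ _).symm
    _ ≤ ∫ y in s, ‖y‖ ^ k * ‖f y‖ :=
        setIntegral_mono_on (hf.norm.const_mul _).integrableOn hfk.integrableOn hs fun y hy => by
          gcongr
          exact hx y hy
    _ ≤ ∫ y, ‖y‖ ^ k * ‖f y‖ :=
        setIntegral_le_integral hfk (Eventually.of_forall fun y => by positivity)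

lemma norm_pow_mul_norm_integral_Ici_le {f : ℝ → E} {k : ℕ} (hf : Integrable f)
    (hfk : Integrable fun y => ‖y‖ ^ k * ‖f y‖) (hf0 : ∫ y, f y = 0) (x : ℝ) :
    ‖x‖ ^ k * ‖∫ y in Set.Ici x, f y‖ ≤ ∫ y, ‖y‖ ^ k * ‖f y‖ := by
  rcases le_total 0 x with hx | hx
  · exact norm_pow_mul_norm_setIntegral_le hf hfk measurableSet_Ici fun y hy =>
      abs_le_abs_of_nonneg hx hy
  · have hflip : ∫ y in Set.Ici x, f y = -∫ y in Set.Iic x, f y :=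
      eq_neg_of_add_eq_zero_right ((integral_Iic_add_Ici hf x).trans hf0)
    rw [hflip, norm_neg]
    exact norm_pow_mul_norm_setIntegral_le hf hfk measurableSet_Iic fun y hy =>
      abs_le_abs_of_nonpos hx hy

lemma exists_schwartzMap_of_hasDerivAt {f : ℝ → E} (h : 𝓢(ℝ, E))
    (hf : ∀ x, HasDerivAt f (h x) x) (hdecay : ∀ k : ℕ, ∃ C : ℝ, ∀ x, ‖x‖ ^ k * ‖f x‖ ≤ C) :
    ∃ S : 𝓢(ℝ, E), ∀ x, S x = f x := by
  have hderiv : deriv f = h := funext fun x => (hf x).deriv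
  refine ⟨⟨f, ?_, fun k n => ?_⟩, fun x => rfl⟩
  · rw [contDiff_infty_iff_deriv, hderiv]
    exact ⟨fun x => (hf x).differentiableAt, h.smooth'⟩
  · cases n with
    | zero => simpa only [norm_iteratedFDeriv_zero] using hdecay k
    | succ n =>
      simpa only [norm_iteratedFDeriv_eq_norm_iteratedDeriv, iteratedDeriv_succ', hderiv]
        using (h.decay k n).imp fun _ => And.right

lemma exists_schwartzMap_eq_integral_Ici [CompleteSpace E] (h : 𝓢(ℝ, E)) (h0 : ∫ y, h y = 0) :
    ∃ T : 𝓢(ℝ, E), ∀ x, T x = ∫ y in Set.Ici x, h y :=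
  exists_schwartzMap_of_hasDerivAt (-h) (hasDerivAt_integral_Ici h.integrable h.continuous)
    fun k => ⟨_, norm_pow_mul_norm_integral_Ici_le h.integrable (h.integrable_pow_mul volume k) h0⟩

end Tail

section VariationOfParameters

/-- The variation of parameters formula built from the homogeneous solutions `k` and `conj k`, with
source `F`. It is complex valued: the solution is its imaginary part, up to the constant coming
from the Wronskian of `k` and `conj k`. -/
noncomputable def variationOfParameters (k : ℝ → ℂ) (F : ℝ → ℝ) (x : ℝ) : ℂ :=
  k x * (∫ y in Set.Iic x, conj (k y) * F y) + conj (k x) * ∫ y in Set.Ici x, k y * F y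

variable {k : ℝ → ℂ} {F : ℝ → ℝ}

lemma im_variationOfParameters (hkF : Integrable fun y => k y * F y) (x : ℝ) :
    (variationOfParameters k F x).im = (k x * conj (∫ y, k y * F y)).im
      - 2 * (k x * conj (∫ y in Set.Ici x, k y * F y)).im := by
  have hconj : ∫ y in Set.Iic x, conj (k y) * F y = conj (∫ y in Set.Iic x, k y * F y) := by
    simp only [← integral_conj, map_mul, Complex.conj_ofReal]
  rw [variationOfParameters, hconj, ← integral_Iic_add_Ici hkF x, map_add]
  simp only [Complex.add_im, Complex.add_re, Complex.mul_im, Complex.conj_re, Complex.conj_im]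
  ring

lemma isBoundedUnder_norm_of_tendsto_sub_planeWave {c : ℂ} {ω : ℝ}
    (hk : Tendsto (fun x : ℝ => k x - c * Complex.exp (ω * I * x)) atTop (𝓝 0)) :
    IsBoundedUnder (· ≤ ·) atTop fun x => ‖k x‖ := by
  obtain ⟨C, hC⟩ := hk.norm.isBoundedUnder_le
  refine ⟨C + ‖c‖, ?_⟩
  simp only [eventually_map] at hC ⊢
  filter_upwards [hC] with x hx
  calc ‖k x‖ ≤ ‖k x - c * Complex.exp (ω * I * x)‖ + ‖c * Complex.exp (ω * I * x)‖ :=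
        norm_le_norm_sub_add _ _
    _ ≤ C + ‖c‖ := by
        rw [norm_mul, norm_planeWave, mul_one]
        gcongr

lemma integral_eq_zero_of_tendsto_im_variationOfParameters {c : ℂ} {ω : ℝ} (hc : c ≠ 0)
    (hω : ω ≠ 0) (hk : Tendsto (fun x : ℝ => k x - c * Complex.exp (ω * I * x)) atTop (𝓝 0))
    (hkF : Integrable fun y => k y * F y)
    (hV : Tendsto (fun x => (variationOfParameters k F x).im) atTop (𝓝 0)) :
    ∫ y, k y * F y = 0 := by
  set J := ∫ y, k y * F y with hJ
  have htail : Tendsto (fun x => k x * conj (∫ y in Set.Ici x, k y * F y)) atTop (𝓝 0) := by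
    have hT := (Complex.continuous_conj.tendsto 0).comp
      (tendsto_integral_Ici_zero (f := fun y => k y * F y) (μ := volume) tendsto_id)
    rw [map_zero] at hT
    exact (isBoundedUnder_norm_of_tendsto_sub_planeWave hk).smul_tendsto_zero hT
  have hkJ : Tendsto (fun x => (k x * conj J).im) atTop (𝓝 0) := by
    have hsum := hV.add (((Complex.continuous_im.tendsto 0).comp htail).const_mul 2)
    simpa [im_variationOfParameters hkF, ← hJ] using hsum
  have hwave : Tendsto (fun x : ℝ => (Complex.exp (ω * I * x) * (c * conj J)).im) atTop (𝓝 0) := by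
    have hdiff := hkJ.sub ((Complex.continuous_im.tendsto _).comp (hk.mul_const (conj J)))
    rw [zero_mul, Complex.zero_im, sub_zero] at hdiff
    refine hdiff.congr fun x => ?_
    rw [Function.comp_apply, ← Complex.sub_im]
    ring_nf
  simpa [hc] using eq_zero_of_tendsto_im_planeWave_mul hω hwave

lemma exists_schwartzMap_eq_mul_ofReal (hk : k.HasTemperateGrowth) (F : 𝓢(ℝ, ℝ)) :
    ∃ h : 𝓢(ℝ, ℂ), ∀ x, h x = k x * F x :=
  ⟨smulLeftCLM ℂ k (F.postcompCLM Complex.ofRealCLM), fun x => by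
    simp [smulLeftCLM_apply_apply hk]⟩

lemma integrable_mul_ofReal (hk : k.HasTemperateGrowth) (F : 𝓢(ℝ, ℝ)) :
    Integrable fun y => k y * F y := by
  obtain ⟨h, hh⟩ := exists_schwartzMap_eq_mul_ofReal hk F
  simpa only [← hh] using h.integrable (μ := volume)

lemma exists_schwartzMap_eq_im_variationOfParameters (hk : k.HasTemperateGrowth) (F : 𝓢(ℝ, ℝ))
    (h0 : ∫ y, k y * F y = 0) :
    ∃ S : 𝓢(ℝ, ℝ), ∀ x, S x = (variationOfParameters k F x).im := by
  obtain ⟨h, hh⟩ := exists_schwartzMap_eq_mul_ofReal hk F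
  obtain ⟨T, hT⟩ := exists_schwartzMap_eq_integral_Ici h (by simpa only [hh] using h0)
  let conjT : 𝓢(ℝ, ℂ) := T.postcompCLM (Complex.conjCLE : ℂ →L[ℝ] ℂ)
  refine ⟨-(2 : ℝ) • (smulLeftCLM ℂ k conjT).postcompCLM Complex.imCLM, fun x => ?_⟩
  simp only [hh] at hT
  rw [im_variationOfParameters (integrable_mul_ofReal hk F), h0, ← hT]
  simp [conjT, smulLeftCLM_apply_apply hk]

end VariationOfParameters

theorem schwartz_solution_iff_orthogonality_general {k : ℝ → ℂ} {c : ℂ} {ω a : ℝ}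
    (hk : k.HasTemperateGrowth) (hc : c ≠ 0) (hω : ω ≠ 0)
    (hwave : Tendsto (fun x : ℝ => k x - c * Complex.exp (ω * I * x)) atTop (𝓝 0)) (ha : a ≠ 0)
    (F : 𝓢(ℝ, ℝ)) (G : ℝ → ℝ) (hG : ∀ x, G x = a * (variationOfParameters k F x).im) :
    (∃ S : 𝓢(ℝ, ℝ), ∀ x, S x = G x) ↔ ∫ x, k x * F x = 0 := by
  constructor
  · rintro ⟨S, hS⟩
    have hV : Tendsto (fun x => (variationOfParameters k F x).im) atTop (𝓝 0) := by
      have hlim := (S.tendsto_cocompact.mono_left atTop_le_cocompact).const_mul a⁻¹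
      simpa [hS, hG, ha] using hlim
    exact integral_eq_zero_of_tendsto_im_variationOfParameters hc hω hwave
      (integrable_mul_ofReal hk F) hV
  · intro h0
    obtain ⟨S, hS⟩ := exists_schwartzMap_eq_im_variationOfParameters hk F h0
    exact ⟨a • S, fun x => by rw [smul_apply, hS, hG, smul_eq_mul]⟩

section Jost

lemma sech_sq (x : ℝ) : sech x ^ 2 = 1 - Real.tanh x ^ 2 := by
  have hcosh := (Real.cosh_pos x).ne'
  rw [sech, Real.tanh_eq_sinh_div_cosh]
  field_simp
  linarith [Real.cosh_sq x]

lemma kJost_eq_planeWave_mul (x : ℝ) :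
    kJost x = Complex.exp ((2 : ℝ) * I * x) *
      (1 + 1 / 2 * (1 - (Real.tanh (x * (√2)⁻¹) : ℂ) ^ 2) + I * √2 * Real.tanh (x * (√2)⁻¹)) := by
  rw [kJost, sech_sq, div_eq_mul_inv x]
  push_cast
  rfl

lemma hasTemperateGrowth_kJost : kJost.HasTemperateGrowth := by
  have hscale : (fun x : ℝ => x * (√2)⁻¹).HasTemperateGrowth := by fun_prop
  have htanh : (fun x : ℝ => (Real.tanh (x * (√2)⁻¹) : ℂ)).HasTemperateGrowth :=
    Function.Complex.hasTemperateGrowth_ofReal.comp (hasTemperateGrowth_tanh.comp hscale)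
  have hwave := hasTemperateGrowth_planeWave 2
  rw [funext kJost_eq_planeWave_mul]
  fun_prop

lemma tendsto_kJost_sub_planeWave :
    Tendsto (fun x : ℝ => kJost x - (1 + I * √2) * Complex.exp ((2 : ℝ) * I * x)) atTop (𝓝 0) := by
  have htanh : Tendsto (fun x : ℝ => (Real.tanh (x * (√2)⁻¹) : ℂ)) atTop (𝓝 1) :=
    (Complex.continuous_ofReal.tendsto' 1 1 Complex.ofReal_one).comp
      (tendsto_tanh_atTop.comp (tendsto_id.atTop_mul_const (by positivity)))
  have hpoly : Continuous fun t : ℂ => 1 / 2 * (1 - t ^ 2) + I * √2 * (t - 1) := by fun_prop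
  have hamp := (hpoly.tendsto' 1 0 (by norm_num)).comp htanh
  have hbdd : IsBoundedUnder (· ≤ ·) atTop fun x : ℝ => ‖Complex.exp ((2 : ℝ) * I * x)‖ := by
    simp only [norm_planeWave]
    exact isBoundedUnder_const
  refine (hbdd.smul_tendsto_zero hamp).congr fun x => ?_
  rw [kJost_eq_planeWave_mul, Function.comp_apply, smul_eq_mul]
  ring

lemma one_add_I_mul_sqrt_two_ne_zero : 1 + I * (√2 : ℂ) ≠ 0 := fun h => by
  simpa using congrArg Complex.re h

end Jost

theorem schwartz_solution_iff_orthogonality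
    (F : SchwartzMap ℝ ℝ)
    (G : ℝ → ℝ)
    (hG : ∀ x : ℝ, G x = (1 / 12) *
      (kJost x * (∫ y in Set.Iic x, (starRingEnd ℂ) (kJost y) * (F y : ℂ))
        + (starRingEnd ℂ) (kJost x) * (∫ y in Set.Ici x, kJost y * (F y : ℂ))).im) :
    (∃ S : SchwartzMap ℝ ℝ, ∀ x : ℝ, S x = G x) ↔ (∫ x : ℝ, kJost x * (F x : ℂ)) = 0 := by
  exact schwartz_solution_iff_orthogonality_general hasTemperateGrowth_kJost
    one_add_I_mul_sqrt_two_ne_zero two_ne_zero tendsto_kJost_sub_planeWave (by norm_num) F G hG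
end

section
/- The modified Fermi Golden Rule holds: with H(x) = tanh(x/√2), Y₁(x) = 2^(-3/4)·√3·tanh(x/√2)·sech(x/√2), f(x) = (3/2)·( H(x)·Y₁(x)² - (∫_ℝ H(y)·Y₁(y)³ dy)·Y₁(x) ), and k(x) = e^(2ix)·( 1 + (1/2)·sech²(x/√2) + i·√2·tanh(x/√2) ), one has ∫_ℝ Im(k(x))·f(x)·sech²(x/(8√2)) dx ≠ 0. -/
open MeasureTheory

noncomputable def Hkink (x : ℝ) : ℝ := Real.tanh (x / Real.sqrt 2)

noncomputable def Y1 (x : ℝ) : ℝ :=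
  (2 : ℝ) ^ (-(3 : ℝ) / 4) * Real.sqrt 3 * Real.tanh (x / Real.sqrt 2) * sech (x / Real.sqrt 2)

noncomputable def fsrc (x : ℝ) : ℝ :=
  (3 / 2) * (Hkink x * (Y1 x) ^ 2 - (∫ y : ℝ, Hkink y * (Y1 y) ^ 3) * Y1 x)

/-!
In the variable `t = x / √2` the product `k f` is `exp (2√2 i t)` times a polynomial in `sech t` and
`tanh t`. Integrating by parts, `∫ k sechⁿ tanh` is `n - 1` times an explicit multiple of the
Fourier transform of `sechⁿ`: the `Y₁` part of `f`, where `n = 1`, drops out, and even powers reduce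
to the Fourier transform of `sech²`, known from the Beta function. This yields the unweighted rule
`∫ k f = -9πi / (2 sinh (√2 π))`. Since `|k f| = O(sech t)` and `0 ≤ 1 - sech² (ε t) ≤ ε² t²`,
the weight `sech² (ε t)` moves the integral by `O(ε²)`, which for `ε = 1/8` is too little to reach
zero.
-/

open scoped Real

section HyperbolicSecant

lemma sech_pos (t : ℝ) : 0 < sech t := one_div_pos.2 (Real.cosh_pos t)

lemma sech_le_one (t : ℝ) : sech t ≤ 1 :=
  (div_le_one (Real.cosh_pos t)).2 (Real.one_le_cosh t)

lemma sech_neg (t : ℝ) : sech (-t) = sech t := by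
  simp only [sech, Real.cosh_neg]

lemma tanh_sq_eq (t : ℝ) : Real.tanh t ^ 2 = 1 - sech t ^ 2 := by
  have hcosh := (Real.cosh_pos t).ne'
  rw [Real.tanh_eq_sinh_div_cosh, sech]
  field_simp
  linarith [Real.cosh_sq t]

lemma sech_le_two_mul_exp_neg_abs (t : ℝ) : sech t ≤ 2 * Real.exp (-|t|) := by
  have hcosh : Real.exp |t| / 2 ≤ Real.cosh t := by
    rw [← Real.cosh_abs, Real.cosh_eq]
    linarith [Real.exp_pos (-|t|)]
  calc sech t ≤ 1 / (Real.exp |t| / 2) := one_div_le_one_div_of_le (by positivity) hcosh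
    _ = 2 * Real.exp (-|t|) := by rw [Real.exp_neg, one_div_div, div_eq_mul_inv]

lemma hasDerivAt_sech (t : ℝ) : HasDerivAt sech (-(sech t * Real.tanh t)) t := by
  have hcosh := (Real.cosh_pos t).ne'
  refine ((hasDerivAt_const t (1 : ℝ)).div (Real.hasDerivAt_cosh t) hcosh).congr_deriv ?_
  rw [Real.tanh_eq_sinh_div_cosh, sech]
  field_simp
  ring

lemma hasDerivAt_tanh_s9 (t : ℝ) : HasDerivAt Real.tanh (sech t ^ 2) t := by
  have hcosh := (Real.cosh_pos t).ne'
  rw [show Real.tanh = Real.sinh / Real.cosh from funext Real.tanh_eq_sinh_div_cosh]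
  refine ((Real.hasDerivAt_sinh t).div (Real.hasDerivAt_cosh t) hcosh).congr_deriv ?_
  rw [sech]
  field_simp
  linarith [Real.cosh_sq t]

lemma hasDerivAt_sech_pow (n : ℕ) (t : ℝ) :
    HasDerivAt (fun t => sech t ^ n) (-(n * (sech t ^ n * Real.tanh t))) t := by
  rcases n with _ | n
  · simpa using hasDerivAt_const t (1 : ℝ)
  · refine ((hasDerivAt_sech t).fun_pow (n + 1)).congr_deriv ?_
    rw [Nat.add_sub_cancel]
    ring

lemma hasDerivAt_sech_pow_mul_tanh (n : ℕ) (t : ℝ) :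
    HasDerivAt (fun t => sech t ^ n * Real.tanh t) ((n + 1) * sech t ^ (n + 2) - n * sech t ^ n)
      t := by
  refine ((hasDerivAt_sech_pow n t).mul (hasDerivAt_tanh_s9 t)).congr_deriv ?_
  linear_combination (-n * sech t ^ n) * tanh_sq_eq t

lemma hasDerivAt_ofReal_sech_pow (n : ℕ) (t : ℝ) : HasDerivAt (fun t : ℝ => (sech t : ℂ) ^ n)
    (-(n * ((sech t : ℂ) ^ n * Real.tanh t))) t := by
  simpa only [Complex.ofReal_pow, Complex.ofReal_mul, Complex.ofReal_neg, Complex.ofReal_natCast]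
    using (hasDerivAt_sech_pow n t).ofReal_comp

lemma hasDerivAt_ofReal_sech_pow_mul_tanh (n : ℕ) (t : ℝ) :
    HasDerivAt (fun t : ℝ => (sech t : ℂ) ^ n * Real.tanh t)
      ((n + 1) * (sech t : ℂ) ^ (n + 2) - n * (sech t : ℂ) ^ n) t := by
  simpa only [Complex.ofReal_pow, Complex.ofReal_mul, Complex.ofReal_sub, Complex.ofReal_add,
    Complex.ofReal_one, Complex.ofReal_natCast]
    using (hasDerivAt_sech_pow_mul_tanh n t).ofReal_comp

@[fun_prop]
lemma continuous_sech : Continuous sech :=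
  continuous_iff_continuousAt.2 fun t => (hasDerivAt_sech t).continuousAt

@[fun_prop]
lemma continuous_tanh : Continuous Real.tanh :=
  continuous_iff_continuousAt.2 fun t => (hasDerivAt_tanh_s9 t).continuousAt

lemma abs_tanh_le_abs (t : ℝ) : |Real.tanh t| ≤ |t| := by
  have hderiv : ∀ s ∈ Set.univ, ‖sech s ^ 2‖ ≤ 1 := fun s _ => by
    rw [Real.norm_of_nonneg (sq_nonneg _)]
    exact pow_le_one₀ (sech_pos s).le (sech_le_one s)
  simpa using convex_univ.norm_image_sub_le_of_norm_hasDerivWithin_le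
    (fun s _ => (hasDerivAt_tanh_s9 s).hasDerivWithinAt) hderiv (Set.mem_univ 0) (Set.mem_univ t)

lemma abs_tanh_mul_sech_le (t : ℝ) : |Real.tanh t * sech t| ≤ 1 / 2 := by
  have hsq := tanh_sq_eq t
  rw [abs_le]
  constructor
  · nlinarith [sq_nonneg (Real.tanh t + sech t)]
  · nlinarith [sq_nonneg (Real.tanh t - sech t)]

end HyperbolicSecant

section Integrability

variable {E : Type*} [NormedAddCommGroup E]

lemma integral_abs_pow_mul_exp_neg_abs (n : ℕ) :
    ∫ t : ℝ, |t| ^ n * Real.exp (-|t|) = 2 * n.factorial := by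
  rw [integral_comp_abs (f := fun t => t ^ n * Real.exp (-t)), ← Real.Gamma_nat_eq_factorial,
    Real.Gamma_eq_integral (by positivity)]
  congr 1
  refine setIntegral_congr_fun measurableSet_Ioi fun t _ => ?_
  simp only [add_sub_cancel_right, Real.rpow_natCast, mul_comm]

lemma integrable_abs_pow_mul_exp_neg_abs (n : ℕ) :
    Integrable fun t : ℝ => |t| ^ n * Real.exp (-|t|) := by
  refine .of_integral_ne_zero ?_
  rw [integral_abs_pow_mul_exp_neg_abs]
  positivity

lemma integrable_sech : Integrable sech := by
  refine ((integrable_abs_pow_mul_exp_neg_abs 0).const_mul 2).mono'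
    continuous_sech.aestronglyMeasurable (.of_forall fun t => ?_)
  rw [Real.norm_of_nonneg (sech_pos t).le, pow_zero, one_mul]
  exact sech_le_two_mul_exp_neg_abs t

lemma integrable_of_norm_le_sech {F : ℝ → E} {C : ℝ} (hF : AEStronglyMeasurable F)
    (hC : ∀ t, ‖F t‖ ≤ C * sech t) : Integrable F :=
  (integrable_sech.const_mul C).mono' hF (.of_forall hC)

lemma integrable_sech_pow_mul_tanh_pow {n : ℕ} (hn : n ≠ 0) (m : ℕ) :
    Integrable fun t => sech t ^ n * Real.tanh t ^ m := by
  refine integrable_of_norm_le_sech (C := 1) (by fun_prop) fun t => ?_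
  have hsech : sech t ^ n ≤ sech t := pow_le_of_le_one (sech_pos t).le (sech_le_one t) hn
  have htanh : |Real.tanh t| ^ m ≤ 1 := pow_le_one₀ (abs_nonneg _) (Real.abs_tanh_lt_one t).le
  rw [norm_mul, norm_pow, norm_pow, Real.norm_of_nonneg (sech_pos t).le, Real.norm_eq_abs]
  nlinarith [pow_pos (sech_pos t) n]

lemma integrable_sech_pow {n : ℕ} (hn : n ≠ 0) : Integrable fun t => sech t ^ n := by
  simpa using integrable_sech_pow_mul_tanh_pow hn 0

lemma integrable_sech_pow_mul_tanh {n : ℕ} (hn : n ≠ 0) :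
    Integrable fun t => sech t ^ n * Real.tanh t := by
  simpa using integrable_sech_pow_mul_tanh_pow hn 1

lemma integrable_ofReal_sech_pow {n : ℕ} (hn : n ≠ 0) :
    Integrable fun t => (sech t : ℂ) ^ n := by
  exact_mod_cast (integrable_sech_pow hn).ofReal (𝕜 := ℂ)

lemma integrable_ofReal_sech_pow_mul_tanh {n : ℕ} (hn : n ≠ 0) :
    Integrable fun t => (sech t : ℂ) ^ n * (Real.tanh t : ℂ) := by
  exact_mod_cast (integrable_sech_pow_mul_tanh hn).ofReal (𝕜 := ℂ)

lemma integrable_cexp_mul_I_mul {q : ℝ → ℂ} (hq : Integrable q) (ω : ℝ) :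
    Integrable fun t : ℝ => Complex.exp (ω * t * Complex.I) * q t := by
  refine hq.bdd_mul (c := 1) (Continuous.aestronglyMeasurable (by fun_prop))
    (.of_forall fun t => ?_)
  rw [← Complex.ofReal_mul, Complex.norm_exp_ofReal_mul_I]

lemma integrable_sech_sq_smul [NormedSpace ℝ E] {F : ℝ → E} (hF : Integrable F) (ε : ℝ) :
    Integrable fun t => sech (ε * t) ^ 2 • F t := by
  refine hF.bdd_smul 1 (Continuous.aestronglyMeasurable (by fun_prop)) (.of_forall fun t => ?_)
  rw [Real.norm_of_nonneg (sq_nonneg _)]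
  exact pow_le_one₀ (sech_pos _).le (sech_le_one _)

/-- The constant `8` is `2 * ∫ t² exp (-|t|)`. -/
lemma norm_integral_sech_sq_smul_sub_le [NormedSpace ℝ E] {F : ℝ → E} {C : ℝ}
    (hF : AEStronglyMeasurable F) (hC : ∀ t, ‖F t‖ ≤ C * sech t) (ε : ℝ) :
    ‖(∫ t, sech (ε * t) ^ 2 • F t) - ∫ t, F t‖ ≤ 8 * C * ε ^ 2 := by
  have hint : Integrable F := integrable_of_norm_le_sech hF hC
  have hbound : ∀ t, ‖sech (ε * t) ^ 2 • F t - F t‖ ≤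
      2 * C * ε ^ 2 * (|t| ^ 2 * Real.exp (-|t|)) := fun t => by
    have hC0 : 0 ≤ C := nonneg_of_mul_nonneg_left ((norm_nonneg _).trans (hC t)) (sech_pos t)
    have htanh : Real.tanh (ε * t) ^ 2 ≤ (ε * t) ^ 2 := sq_le_sq.2 (abs_tanh_le_abs _)
    have hsub : sech (ε * t) ^ 2 • F t - F t = -(Real.tanh (ε * t) ^ 2 • F t) := by
      rw [tanh_sq_eq, sub_smul, one_smul, neg_sub]
    calc ‖sech (ε * t) ^ 2 • F t - F t‖ = Real.tanh (ε * t) ^ 2 * ‖F t‖ := by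
          rw [hsub, norm_neg, norm_smul, Real.norm_of_nonneg (sq_nonneg _)]
      _ ≤ (ε * t) ^ 2 * (C * (2 * Real.exp (-|t|))) := by
          gcongr
          exact (hC t).trans (by gcongr; exact sech_le_two_mul_exp_neg_abs t)
      _ = 2 * C * ε ^ 2 * (|t| ^ 2 * Real.exp (-|t|)) := by rw [sq_abs]; ring
  rw [← integral_sub (integrable_sech_sq_smul hint ε) hint]
  refine (norm_integral_le_of_norm_le ((integrable_abs_pow_mul_exp_neg_abs 2).const_mul _)
    (.of_forall hbound)).trans_eq ?_
  rw [integral_const_mul, integral_abs_pow_mul_exp_neg_abs, Nat.factorial_two]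
  push_cast
  ring

end Integrability

section Integrals

lemma betaIntegral_eq_integral_sigmoid (u v : ℂ) :
    Complex.betaIntegral u v =
      ∫ t : ℝ, (Real.sigmoid t : ℂ) ^ u * (Real.sigmoid (-t) : ℂ) ^ v := by
  have hcov := integral_image_eq_integral_abs_deriv_smul MeasurableSet.univ
    (fun t _ => (Real.hasDerivAt_sigmoid t).hasDerivWithinAt) Real.sigmoid_injective.injOn
    (fun x : ℝ => (x : ℂ) ^ (u - 1) * (1 - (x : ℂ)) ^ (v - 1))
  rw [Set.image_univ, Real.range_sigmoid, setIntegral_univ] at hcov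
  rw [Complex.betaIntegral, intervalIntegral.integral_of_le zero_le_one,
    integral_Ioc_eq_integral_Ioo, hcov]
  refine integral_congr_ae (.of_forall fun t => ?_)
  have hpos := Real.sigmoid_pos t
  have hneg := Real.sigmoid_pos (-t)
  have hne : (Real.sigmoid t : ℂ) ≠ 0 := by exact_mod_cast hpos.ne'
  have hne' : (Real.sigmoid (-t) : ℂ) ≠ 0 := by exact_mod_cast hneg.ne'
  simp only [← Complex.ofReal_one, ← Complex.ofReal_sub, ← Real.sigmoid_neg,
    abs_of_pos (mul_pos hpos hneg), Complex.real_smul, Complex.ofReal_mul]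
  rw [Complex.ofReal_one, Complex.cpow_sub _ _ hne, Complex.cpow_sub _ _ hne', Complex.cpow_one,
    Complex.cpow_one]
  field_simp

lemma sigmoid_two_mul (t : ℝ) : Real.sigmoid (2 * t) = Real.exp t * (sech t / 2) := by
  have hexp : Real.exp (-(2 * t)) = Real.exp (-t) * Real.exp (-t) := by
    rw [← Real.exp_add]; ring_nf
  have := Real.exp_pos t
  rw [Real.sigmoid_def, sech, Real.cosh_eq, hexp, Real.exp_neg]
  field_simp

lemma sigmoid_two_mul_cpow (t : ℝ) (u : ℂ) :
    (Real.sigmoid (2 * t) : ℂ) ^ u = Complex.exp (t * u) * ((sech t / 2 : ℝ) : ℂ) ^ u := by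
  rw [sigmoid_two_mul, Complex.ofReal_mul,
    Complex.mul_cpow_ofReal_nonneg (Real.exp_pos _).le (half_pos (sech_pos t)).le,
    Complex.cpow_def_of_ne_zero (by exact_mod_cast (Real.exp_pos t).ne'),
    ← Complex.ofReal_log (Real.exp_pos t).le, Real.log_exp]

lemma sigmoid_cpow_mul_sigmoid_neg_cpow (t : ℝ) (z : ℂ) :
    (Real.sigmoid (2 * t) : ℂ) ^ (1 + z) * (Real.sigmoid (-(2 * t)) : ℂ) ^ (1 - z) =
      4⁻¹ * (Complex.exp (2 * z * t) * (sech t : ℂ) ^ 2) := by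
  have hne : ((sech t / 2 : ℝ) : ℂ) ≠ 0 := by exact_mod_cast (half_pos (sech_pos t)).ne'
  have hsech : ((sech t / 2 : ℝ) : ℂ) ^ (1 + z) * ((sech t / 2 : ℝ) : ℂ) ^ (1 - z) =
      4⁻¹ * (sech t : ℂ) ^ 2 := by
    rw [← Complex.cpow_add _ _ hne, show 1 + z + (1 - z) = (2 : ℕ) by push_cast; ring,
      Complex.cpow_natCast]
    push_cast
    ring
  have hphase : Complex.exp (t * (1 + z)) * Complex.exp ((-t : ℝ) * (1 - z)) =
      Complex.exp (2 * z * t) := by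
    rw [← Complex.exp_add]
    push_cast
    ring_nf
  rw [← mul_neg, sigmoid_two_mul_cpow, sigmoid_two_mul_cpow, sech_neg, mul_mul_mul_comm, hphase,
    hsech, mul_left_comm]

lemma integral_cexp_mul_sech_sq {z : ℂ} (hz : |z.re| < 1) :
    ∫ t : ℝ, Complex.exp (2 * z * t) * (sech t : ℂ) ^ 2 =
      2 * (Complex.Gamma (1 + z) * Complex.Gamma (1 - z)) := by
  obtain ⟨hlow, hhigh⟩ := abs_lt.1 hz
  have hGamma_two : Complex.Gamma (1 + z + (1 - z)) = 1 := by
    rw [show 1 + z + (1 - z) = ((1 : ℕ) : ℂ) + 1 by push_cast; ring,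
      Complex.Gamma_nat_eq_factorial, Nat.factorial_one, Nat.cast_one]
  have hscale := Measure.integral_comp_mul_left
    (fun t : ℝ => (Real.sigmoid t : ℂ) ^ (1 + z) * (Real.sigmoid (-t) : ℂ) ^ (1 - z)) 2
  simp only [sigmoid_cpow_mul_sigmoid_neg_cpow] at hscale
  rw [← betaIntegral_eq_integral_sigmoid, integral_const_mul,
    abs_of_pos (by norm_num : (0 : ℝ) < 2⁻¹), Complex.real_smul] at hscale
  rw [Complex.Gamma_mul_Gamma_eq_betaIntegral (s := 1 + z) (t := 1 - z)
    (by simpa using by linarith) (by simpa using hhigh), hGamma_two, one_mul]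
  push_cast at hscale
  linear_combination 4 * hscale

/-- The Fourier integral of `sechⁿ` at angular frequency `ω`, with phase `exp (iωt)` and without
normalising factor. -/
noncomputable def sechPowFourier (n : ℕ) (ω : ℝ) : ℂ :=
  ∫ t : ℝ, Complex.exp (ω * t * Complex.I) * (sech t : ℂ) ^ n

lemma sechPowFourier_two {ω : ℝ} (hω : ω ≠ 0) :
    sechPowFourier 2 ω = π * ω / Real.sinh (π * ω / 2) := by
  set z : ℂ := ω / 2 * Complex.I with hz
  have hz0 : z ≠ 0 := by simp [hz, hω]
  have hre : z.re = 0 := by simp [hz]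
  have hsin : Complex.sin (π * z) = Real.sinh (π * ω / 2) * Complex.I := by
    rw [Complex.ofReal_sinh, ← Complex.sin_mul_I, hz]
    push_cast
    ring_nf
  have hsinh : (Real.sinh (π * ω / 2) : ℂ) ≠ 0 := by
    exact_mod_cast Real.sinh_ne_zero.2 (by positivity)
  calc sechPowFourier 2 ω
      = ∫ t : ℝ, Complex.exp (2 * z * t) * (sech t : ℂ) ^ 2 := by
        refine integral_congr_ae (.of_forall fun t => ?_)
        simp only [hz]
        ring_nf
    _ = 2 * (z * (π / Complex.sin (π * z))) := by
        rw [integral_cexp_mul_sech_sq (by simp [hre]), add_comm, Complex.Gamma_add_one z hz0,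
          mul_assoc, Complex.Gamma_mul_Gamma_one_sub]
    _ = π * ω / Real.sinh (π * ω / 2) := by
        rw [hsin, hz]
        field_simp [Complex.I_ne_zero]

lemma integral_cexp_mul_I_mul_deriv {q q' : ℝ → ℂ} (ω : ℝ)
    (hderiv : ∀ t, HasDerivAt q (q' t) t) (hq : Integrable q) (hq' : Integrable q') :
    ∫ t : ℝ, Complex.exp (ω * t * Complex.I) * q' t =
      -(ω * Complex.I * ∫ t : ℝ, Complex.exp (ω * t * Complex.I) * q t) := by
  have hphase : ∀ t : ℝ, HasDerivAt (fun t : ℝ => Complex.exp (ω * t * Complex.I))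
      (ω * Complex.I * Complex.exp (ω * t * Complex.I)) t := fun t => by
    have harg : HasDerivAt (fun t : ℝ => (ω * t * Complex.I : ℂ)) (ω * Complex.I) t := by
      simpa using ((hasDerivAt_id t).ofReal_comp.const_mul (ω : ℂ)).mul_const Complex.I
    exact harg.cexp.congr_deriv (mul_comm _ _)
  have hint := integrable_cexp_mul_I_mul hq ω
  have hphase' : Integrable fun t : ℝ =>
      ω * Complex.I * Complex.exp (ω * t * Complex.I) * q t := by
    simpa only [mul_assoc] using hint.const_mul (ω * Complex.I)
  rw [integral_mul_deriv_eq_deriv_mul_of_integrable (fun t _ => hphase t) (fun t _ => hderiv t)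
    (integrable_cexp_mul_I_mul hq' ω) hphase' hint]
  simp only [mul_assoc, integral_const_mul]

lemma integral_cexp_mul_sech_pow_mul_tanh {n : ℕ} (hn : n ≠ 0) (ω : ℝ) :
    ∫ t : ℝ, Complex.exp (ω * t * Complex.I) * ((sech t : ℂ) ^ n * Real.tanh t) =
      ω * Complex.I / n * sechPowFourier n ω := by
  have hparts := integral_cexp_mul_I_mul_deriv ω (hasDerivAt_ofReal_sech_pow n)
    (integrable_ofReal_sech_pow hn) ((integrable_ofReal_sech_pow_mul_tanh hn).const_mul (n : ℂ)).neg
  simp only [mul_neg, mul_left_comm _ (n : ℂ), integral_neg, integral_const_mul, neg_inj] at hparts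
  have hn' : (n : ℂ) ≠ 0 := Nat.cast_ne_zero.2 hn
  rw [sechPowFourier, div_mul_eq_mul_div, eq_div_iff hn', mul_comm, hparts]

lemma sechPowFourier_add_two {n : ℕ} (hn : n ≠ 0) (ω : ℝ) :
    sechPowFourier (n + 2) ω = (n ^ 2 + ω ^ 2) / (n * (n + 1)) * sechPowFourier n ω := by
  have hsech := (integrable_ofReal_sech_pow hn).const_mul (n : ℂ)
  have hsech' := (integrable_ofReal_sech_pow (Nat.succ_ne_zero (n + 1))).const_mul (n + 1 : ℂ)
  have hparts := integral_cexp_mul_I_mul_deriv ω (hasDerivAt_ofReal_sech_pow_mul_tanh n)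
    (integrable_ofReal_sech_pow_mul_tanh hn) (hsech'.sub hsech)
  have hsplit := integral_sub (integrable_cexp_mul_I_mul hsech' ω)
    (integrable_cexp_mul_I_mul hsech ω)
  simp only [← mul_sub] at hsplit
  rw [hsplit, integral_cexp_mul_sech_pow_mul_tanh hn] at hparts
  simp only [mul_left_comm _ (n : ℂ), mul_left_comm _ (n + 1 : ℂ), integral_const_mul] at hparts
  have hn' : (n : ℂ) ≠ 0 := Nat.cast_ne_zero.2 hn
  have hn'' : (n + 1 : ℂ) ≠ 0 := Nat.cast_add_one_ne_zero n
  change (n + 1) * sechPowFourier (n + 2) ω - n * sechPowFourier n ω = _ at hparts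
  field_simp at hparts ⊢
  linear_combination hparts - ω ^ 2 * sechPowFourier n ω * Complex.I_sq

lemma sechPowFourier_zero_right (n : ℕ) : sechPowFourier n 0 = (∫ t, sech t ^ n : ℝ) := by
  simp only [sechPowFourier, ← integral_complex_ofReal, Complex.ofReal_zero, zero_mul,
    Complex.exp_zero, one_mul, Complex.ofReal_pow]

lemma integral_sech_pow_add_two {n : ℕ} (hn : n ≠ 0) :
    ∫ t, sech t ^ (n + 2) = n / (n + 1) * ∫ t, sech t ^ n := by
  have hrec := sechPowFourier_add_two hn 0
  have hn' : (n : ℝ) ≠ 0 := Nat.cast_ne_zero.2 hn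
  rw [sechPowFourier_zero_right, sechPowFourier_zero_right] at hrec
  norm_cast at hrec
  rw [hrec]
  push_cast
  field_simp
  ring

lemma integral_sech : ∫ t, sech t = π := by
  have hcov := integral_image_eq_integral_abs_deriv_smul MeasurableSet.univ
    (fun t _ => (Real.hasDerivAt_sinh t).hasDerivWithinAt) Real.sinh_injective.injOn
    (fun x => (1 + x ^ 2)⁻¹)
  rw [Set.image_univ, Real.sinh_surjective.range_eq, setIntegral_univ, setIntegral_univ,
    integral_univ_inv_one_add_sq] at hcov
  rw [hcov]
  refine integral_congr_ae (.of_forall fun t => ?_)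
  have hcosh := Real.cosh_pos t
  simp only [sech, smul_eq_mul, abs_of_pos hcosh, add_comm (1 : ℝ), ← Real.cosh_sq]
  field_simp

lemma integral_tanh_pow_four_mul_sech_cube : ∫ t, Real.tanh t ^ 4 * sech t ^ 3 = π / 16 := by
  have hthree : ∫ t, sech t ^ 3 = π / 2 := by
    rw [integral_sech_pow_add_two one_ne_zero]
    simp only [pow_one, integral_sech]
    push_cast
    ring
  have hfive : ∫ t, sech t ^ 5 = 3 * π / 8 := by
    rw [integral_sech_pow_add_two three_ne_zero, hthree]
    push_cast
    ring
  have hseven : ∫ t, sech t ^ 7 = 5 * π / 16 := by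
    rw [integral_sech_pow_add_two (by decide : 5 ≠ 0), hfive]
    push_cast
    ring
  have hint : Integrable fun t => sech t ^ 3 - 2 * sech t ^ 5 :=
    (integrable_sech_pow (by decide)).sub ((integrable_sech_pow (by decide)).const_mul 2)
  calc ∫ t, Real.tanh t ^ 4 * sech t ^ 3 = ∫ t, (sech t ^ 3 - 2 * sech t ^ 5 + sech t ^ 7) := by
        refine integral_congr_ae (.of_forall fun t => ?_)
        linear_combination (Real.tanh t ^ 2 + 1 - sech t ^ 2) * sech t ^ 3 * tanh_sq_eq t
    _ = π / 16 := by
        rw [integral_add hint (integrable_sech_pow (by decide)),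
          integral_sub (integrable_sech_pow (by decide))
            ((integrable_sech_pow (by decide)).const_mul 2),
          integral_const_mul, hthree, hfive, hseven]
        ring

end Integrals

section GoldenRule

lemma kJost_sqrt_two_mul (t : ℝ) :
    kJost (√2 * t) = Complex.exp ((2 * √2 : ℝ) * t * Complex.I) *
      (1 + (sech t : ℂ) ^ 2 / 2 + √2 * Real.tanh t * Complex.I) := by
  rw [kJost, mul_div_cancel_left₀ t (by positivity : √2 ≠ 0)]
  push_cast
  ring_nf

lemma norm_kJost_le_two (x : ℝ) : ‖kJost x‖ ≤ 2 := by
  obtain ⟨t, rfl⟩ : ∃ t, x = √2 * t := ⟨x / √2, (mul_div_cancel₀ x (by positivity)).symm⟩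
  have htwo : √2 ^ 2 = 2 := Real.sq_sqrt zero_le_two
  have hnormSq : Complex.normSq ((1 + sech t ^ 2 / 2 : ℝ) + (√2 * Real.tanh t : ℝ) * Complex.I) =
      3 - sech t ^ 2 + sech t ^ 4 / 4 := by
    rw [Complex.normSq_add_mul_I]
    linear_combination Real.tanh t ^ 2 * htwo + 2 * tanh_sq_eq t
  have hpolar : kJost (√2 * t) = Complex.exp ((2 * √2 * t : ℝ) * Complex.I) *
      ((1 + sech t ^ 2 / 2 : ℝ) + (√2 * Real.tanh t : ℝ) * Complex.I) := by
    rw [kJost_sqrt_two_mul]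
    push_cast
    rfl
  rw [hpolar, norm_mul, Complex.norm_exp_ofReal_mul_I, one_mul, Complex.norm_def, hnormSq]
  refine Real.sqrt_le_iff.2 ⟨zero_le_two, ?_⟩
  nlinarith [pow_le_one₀ (n := 4) (sech_pos t).le (sech_le_one t), sq_nonneg (sech t)]

/-- The normalisation constant of `Y₁` in `L²(ℝ)`. -/
noncomputable def Y1Const : ℝ := (2 : ℝ) ^ (-(3 : ℝ) / 4) * √3

lemma Y1_sqrt_two_mul (t : ℝ) : Y1 (√2 * t) = Y1Const * (Real.tanh t * sech t) := by
  rw [Y1, mul_div_cancel_left₀ t (by positivity : √2 ≠ 0), Y1Const, mul_assoc]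

lemma Hkink_sqrt_two_mul (t : ℝ) : Hkink (√2 * t) = Real.tanh t := by
  rw [Hkink, mul_div_cancel_left₀ t (by positivity : √2 ≠ 0)]

lemma Y1Const_sq : Y1Const ^ 2 = 3 * √2 / 4 := by
  have hrpow : ((2 : ℝ) ^ (-(3 : ℝ) / 4)) ^ 2 = √2 / 4 := by
    rw [← Real.rpow_natCast, ← Real.rpow_mul zero_le_two,
      show -(3 : ℝ) / 4 * (2 : ℕ) = 1 / 2 - 2 by norm_num, Real.rpow_sub two_pos,
      ← Real.sqrt_eq_rpow]
    norm_num
  rw [Y1Const, mul_pow, hrpow, Real.sq_sqrt zero_le_three]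
  ring

lemma integral_comp_sqrt_two_mul {E : Type*} [NormedAddCommGroup E] [NormedSpace ℝ E]
    (g : ℝ → E) : ∫ x, g x = √2 • ∫ t, g (√2 * t) := by
  rw [Measure.integral_comp_mul_left, abs_of_pos (by positivity : (0 : ℝ) < (√2)⁻¹), smul_smul,
    mul_inv_cancel₀ (by positivity), one_smul]

lemma integral_Hkink_mul_Y1_cube : ∫ y, Hkink y * Y1 y ^ 3 = √2 * Y1Const ^ 3 * (π / 16) := by
  rw [integral_comp_sqrt_two_mul fun y => Hkink y * Y1 y ^ 3,
    ← integral_tanh_pow_four_mul_sech_cube, smul_eq_mul, mul_assoc,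
    ← integral_const_mul (Y1Const ^ 3)]
  congr 2
  ext t
  simp only [Hkink_sqrt_two_mul, Y1_sqrt_two_mul]
  ring

lemma fsrc_sqrt_two_mul (t : ℝ) : fsrc (√2 * t) =
    9 * √2 / 8 * (Real.tanh t ^ 3 * sech t ^ 2 - 3 * π / 32 * (Real.tanh t * sech t)) := by
  have htwo : √2 ^ 2 = 2 := Real.sq_sqrt zero_le_two
  rw [fsrc, integral_Hkink_mul_Y1_cube, Hkink_sqrt_two_mul, Y1_sqrt_two_mul]
  linear_combination (3 / 2 * Real.tanh t ^ 3 * sech t ^ 2 - 3 / 2 * √2 * (π / 16) *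
    (Real.tanh t * sech t) * (Y1Const ^ 2 + 3 * √2 / 4)) * Y1Const_sq -
    27 * √2 * π / 512 * (Real.tanh t * sech t) * htwo

lemma abs_fsrc_sqrt_two_mul_le (t : ℝ) : |fsrc (√2 * t)| ≤ 9 * √2 / 16 * sech t := by
  have hpi := Real.pi_pos
  have hpi_lt := Real.pi_lt_four
  have hscale : 0 < 9 * √2 / 8 * sech t := by have := sech_pos t; positivity
  have htanh : |Real.tanh t| ≤ 1 := (Real.abs_tanh_lt_one t).le
  have hnonneg : 0 ≤ Real.tanh t ^ 2 * sech t := mul_nonneg (sq_nonneg _) (sech_pos t).le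
  have hhalf : Real.tanh t ^ 2 * sech t ≤ 1 / 2 := by
    calc Real.tanh t ^ 2 * sech t = Real.tanh t * (Real.tanh t * sech t) := by ring
      _ ≤ |Real.tanh t| * |Real.tanh t * sech t| := (le_abs_self _).trans_eq (abs_mul _ _)
      _ ≤ 1 * (1 / 2) := mul_le_mul htanh (abs_tanh_mul_sech_le t) (abs_nonneg _) zero_le_one
      _ = 1 / 2 := one_mul _
  have hprofile : |Real.tanh t ^ 2 * sech t - 3 * π / 32| ≤ 1 / 2 :=
    abs_le.2 ⟨by linarith, by linarith⟩
  calc |fsrc (√2 * t)| = |9 * √2 / 8 * sech t *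
          (Real.tanh t * (Real.tanh t ^ 2 * sech t - 3 * π / 32))| := by
        rw [fsrc_sqrt_two_mul]
        ring_nf
    _ = 9 * √2 / 8 * sech t * (|Real.tanh t| * |Real.tanh t ^ 2 * sech t - 3 * π / 32|) := by
        rw [abs_mul, abs_of_pos hscale, abs_mul]
    _ ≤ 9 * √2 / 8 * sech t * (1 * (1 / 2)) := by gcongr
    _ = 9 * √2 / 16 * sech t := by ring

@[fun_prop]
lemma continuous_kJost : Continuous kJost := by
  unfold kJost
  fun_prop

@[fun_prop]
lemma continuous_fsrc : Continuous fsrc := by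
  unfold fsrc Hkink Y1
  fun_prop

lemma integrable_kJost_mul_sech_pow_mul_tanh {n : ℕ} (hn : n ≠ 0) :
    Integrable fun t => kJost (√2 * t) * ((sech t : ℂ) ^ n * Real.tanh t) :=
  (integrable_ofReal_sech_pow_mul_tanh hn).bdd_mul (c := 2)
    (Continuous.aestronglyMeasurable (by fun_prop)) (.of_forall fun _ => norm_kJost_le_two _)

lemma kJost_sqrt_two_mul_mul_sech_pow_mul_tanh (n : ℕ) (t : ℝ) :
    kJost (√2 * t) * ((sech t : ℂ) ^ n * Real.tanh t) =
      Complex.exp ((2 * √2 : ℝ) * t * Complex.I) * ((sech t : ℂ) ^ n * Real.tanh t) +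
        1 / 2 * (Complex.exp ((2 * √2 : ℝ) * t * Complex.I) *
          ((sech t : ℂ) ^ (n + 2) * Real.tanh t)) +
        √2 * Complex.I * (Complex.exp ((2 * √2 : ℝ) * t * Complex.I) * (sech t : ℂ) ^ n) -
        √2 * Complex.I * (Complex.exp ((2 * √2 : ℝ) * t * Complex.I) * (sech t : ℂ) ^ (n + 2)) := by
  have htanh : (Real.tanh t : ℂ) ^ 2 = 1 - (sech t : ℂ) ^ 2 := by exact_mod_cast tanh_sq_eq t
  rw [kJost_sqrt_two_mul]
  linear_combination (Complex.exp ((2 * √2 : ℝ) * t * Complex.I) * √2 * Complex.I *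
    (sech t : ℂ) ^ n) * htanh

/-- For `n = 1` the right-hand side vanishes: this is the orthogonality of `k` and `Y₁`. -/
lemma integral_kJost_mul_sech_pow_mul_tanh {n : ℕ} (hn : n ≠ 0) :
    ∫ t, kJost (√2 * t) * ((sech t : ℂ) ^ n * Real.tanh t) =
      4 * √2 * (n - 1) / (n * (n + 2)) * Complex.I * sechPowFourier n (2 * √2) := by
  set ω : ℝ := 2 * √2 with hω
  have hωsq : (ω : ℂ) ^ 2 = 8 := by
    rw [hω, ← Complex.ofReal_pow, mul_pow, Real.sq_sqrt zero_le_two]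
    norm_num
  have hn2 : n + 2 ≠ 0 := Nat.succ_ne_zero _
  have hA {m : ℕ} (hm : m ≠ 0) := integrable_cexp_mul_I_mul (integrable_ofReal_sech_pow hm) ω
  have hB {m : ℕ} (hm : m ≠ 0) :=
    integrable_cexp_mul_I_mul (integrable_ofReal_sech_pow_mul_tanh hm) ω
  simp only [kJost_sqrt_two_mul_mul_sech_pow_mul_tanh]
  rw [integral_sub (((hB hn).fun_add ((hB hn2).const_mul _)).fun_add ((hA hn).const_mul _))
      ((hA hn2).const_mul _),
    integral_add ((hB hn).fun_add ((hB hn2).const_mul _)) ((hA hn).const_mul _),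
    integral_add (hB hn) ((hB hn2).const_mul _), integral_const_mul, integral_const_mul,
    integral_const_mul, integral_cexp_mul_sech_pow_mul_tanh hn,
    integral_cexp_mul_sech_pow_mul_tanh hn2, ← sechPowFourier, ← sechPowFourier,
    sechPowFourier_add_two hn, hωsq, hω]
  have hn0 : (n : ℂ) ≠ 0 := Nat.cast_ne_zero.2 hn
  have hn1 : (n + 1 : ℂ) ≠ 0 := Nat.cast_add_one_ne_zero n
  have hn2' : (n + 2 : ℂ) ≠ 0 := by exact_mod_cast hn2
  push_cast
  field_simp
  ring

lemma sinh_sqrt_two_mul_pi_lt : Real.sinh (√2 * π) < 16 * π := by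
  have hpi := Real.pi_gt_d2
  have harg : √2 * π < 9 / 2 := by
    refine lt_of_pow_lt_pow_left₀ 2 (by norm_num) ?_
    rw [mul_pow, Real.sq_sqrt zero_le_two]
    nlinarith [Real.pi_lt_d2]
  have hexp : Real.exp (9 / 2) < 100 := by
    refine lt_of_pow_lt_pow_left₀ 2 (by norm_num) ?_
    calc Real.exp (9 / 2) ^ 2 = Real.exp 1 ^ 9 := by
          rw [← Real.exp_nat_mul, ← Real.exp_nat_mul]
          norm_num
      _ < 2.7182818286 ^ 9 := by gcongr; exact Real.exp_one_lt_d9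
      _ < 100 ^ 2 := by norm_num
  calc Real.sinh (√2 * π) < Real.exp (√2 * π) / 2 := by
        rw [Real.sinh_eq]
        linarith [Real.exp_pos (-(√2 * π))]
    _ < Real.exp (9 / 2) / 2 := by gcongr
    _ < 16 * π := by linarith

/-- The Fermi Golden Rule without weight. -/
lemma integral_kJost_mul_fsrc : ∫ t, kJost (√2 * t) * (fsrc (√2 * t) : ℂ) =
    (-(9 * √2 * π / (4 * Real.sinh (√2 * π))) : ℝ) * Complex.I := by
  have hfour : sechPowFourier 4 (2 * √2) = 2 * sechPowFourier 2 (2 * √2) := by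
    rw [sechPowFourier_add_two two_ne_zero, ← Complex.ofReal_pow, mul_pow,
      Real.sq_sqrt zero_le_two]
    norm_num
  have htwo : sechPowFourier 2 (2 * √2) = 2 * √2 * π / Real.sinh (√2 * π) := by
    rw [sechPowFourier_two (by positivity), show π * (2 * √2) / 2 = √2 * π by ring]
    push_cast
    ring
  have hsq : (√2 : ℂ) ^ 2 = 2 := by exact_mod_cast Real.sq_sqrt zero_le_two
  have hexpand : ∀ t, kJost (√2 * t) * (fsrc (√2 * t) : ℂ) = 9 * √2 / 8 *
      (kJost (√2 * t) * ((sech t : ℂ) ^ 2 * Real.tanh t) +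
        -(3 * π / 32) * (kJost (√2 * t) * ((sech t : ℂ) ^ 1 * Real.tanh t)) -
        kJost (√2 * t) * ((sech t : ℂ) ^ 4 * Real.tanh t)) := fun t => by
    have htanh : (Real.tanh t : ℂ) ^ 2 = 1 - (sech t : ℂ) ^ 2 := by exact_mod_cast tanh_sq_eq t
    rw [fsrc_sqrt_two_mul]
    push_cast [-Complex.ofReal_tanh]
    linear_combination (9 * √2 / 8 * kJost (√2 * t) * (sech t : ℂ) ^ 2 * Real.tanh t) * htanh
  have hint {m : ℕ} (hm : m ≠ 0) := integrable_kJost_mul_sech_pow_mul_tanh hm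
  simp only [hexpand]
  rw [integral_const_mul, integral_sub ((hint two_ne_zero).fun_add ((hint one_ne_zero).const_mul _))
      (hint four_ne_zero), integral_add (hint two_ne_zero) ((hint one_ne_zero).const_mul _),
    integral_const_mul,
    integral_kJost_mul_sech_pow_mul_tanh two_ne_zero,
    integral_kJost_mul_sech_pow_mul_tanh four_ne_zero,
    integral_kJost_mul_sech_pow_mul_tanh one_ne_zero, hfour, htwo]
  push_cast [-Complex.ofReal_sinh]
  linear_combination (-(9 / 8) * √2 * π / Real.sinh (√2 * π) * Complex.I : ℂ) * hsq

lemma norm_kJost_mul_fsrc_le (t : ℝ) :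
    ‖kJost (√2 * t) * (fsrc (√2 * t) : ℂ)‖ ≤ 9 * √2 / 8 * sech t := by
  rw [norm_mul, Complex.norm_real, Real.norm_eq_abs]
  calc ‖kJost (√2 * t)‖ * |fsrc (√2 * t)| ≤ 2 * (9 * √2 / 16 * sech t) :=
        mul_le_mul (norm_kJost_le_two _) (abs_fsrc_sqrt_two_mul_le t) (abs_nonneg _) zero_le_two
    _ = 9 * √2 / 8 * sech t := by ring

lemma im_integral_sech_sq_smul_kJost_mul_fsrc_neg {ε : ℝ} (hε : |ε| ≤ 1 / 8) :
    (∫ t, sech (ε * t) ^ 2 • (kJost (√2 * t) * (fsrc (√2 * t) : ℂ))).im < 0 := by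
  have hclose := (Complex.abs_im_le_norm _).trans (norm_integral_sech_sq_smul_sub_le
    (Continuous.aestronglyMeasurable (by fun_prop)) norm_kJost_mul_fsrc_le ε)
  rw [integral_kJost_mul_fsrc, Complex.sub_im, Complex.im_ofReal_mul, Complex.I_im, mul_one]
    at hclose
  have hεsq : ε ^ 2 ≤ 1 / 64 := by
    rw [← sq_abs]
    nlinarith [abs_nonneg ε]
  have : 0 < Real.sinh (√2 * π) := Real.sinh_pos_iff.2 (by positivity)
  have hgap : 8 * (9 * √2 / 8) * ε ^ 2 < 9 * √2 * π / (4 * Real.sinh (√2 * π)) := by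
    calc 8 * (9 * √2 / 8) * ε ^ 2 ≤ 9 * √2 / 64 := by nlinarith [Real.sqrt_nonneg 2]
      _ = 9 * √2 * π / (4 * (16 * π)) := by field_simp; norm_num
      _ < 9 * √2 * π / (4 * Real.sinh (√2 * π)) := by gcongr; exact sinh_sqrt_two_mul_pi_lt
  linarith [(abs_le.1 hclose).2]

theorem modified_fermi_golden_rule_general {ε : ℝ} (hε : |ε| ≤ 1 / 8) :
    ∫ x : ℝ, (kJost x).im * fsrc x * sech (ε * (x / √2)) ^ 2 < 0 := by
  have hint : Integrable fun t => sech (ε * t) ^ 2 • (kJost (√2 * t) * (fsrc (√2 * t) : ℂ)) :=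
    integrable_sech_sq_smul (integrable_of_norm_le_sech
      (Continuous.aestronglyMeasurable (by fun_prop)) norm_kJost_mul_fsrc_le) ε
  calc ∫ x : ℝ, (kJost x).im * fsrc x * sech (ε * (x / √2)) ^ 2
      = √2 * (∫ t, sech (ε * t) ^ 2 • (kJost (√2 * t) * (fsrc (√2 * t) : ℂ))).im := by
        rw [integral_comp_sqrt_two_mul, smul_eq_mul, ← Complex.imCLM_apply,
          ← Complex.imCLM.integral_comp_comm hint]
        congr 2
        ext t
        rw [mul_div_cancel_left₀ t (by positivity : √2 ≠ 0), Complex.imCLM_apply, Complex.smul_im,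
          Complex.im_mul_ofReal, smul_eq_mul, mul_comm]
    _ < 0 := mul_neg_of_pos_of_neg (by positivity)
        (im_integral_sech_sq_smul_kJost_mul_fsrc_neg hε)

end GoldenRule

theorem modified_fermi_golden_rule :
    (∫ x : ℝ, (kJost x).im * fsrc x * sech (x / (8 * Real.sqrt 2)) ^ 2) ≠ 0 := by
  have hscale : ∀ x : ℝ, x / (8 * √2) = 1 / 8 * (x / √2) := fun x => by field_simp
  simp only [hscale]
  exact (modified_fermi_golden_rule_general (by norm_num)).ne
end
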